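/- A map M admits a {1}-coloring if and only if its medial Med(M) admits a {0}-coloring. -/

import Mathlib

/-- A (combinatorial) map: a nonempty set of flags `Ω` together with three
permutations `r 0, r 1, r 2` which are fixed-point-free involutions, such that
`r 0` and `r 2` commute with fixed-point-free product, and such that the
connection group `⟨r 0, r 1, r 2⟩` acts transitively on `Ω`. -/
structure CMap (Ω : Type) where
  r : Fin 3 → Equiv.Perm Ω
  nonempty : Nonempty Ω
  invol : ∀ (i : Fin 3) (f : Ω), r i (r i f) = f
  fpf : ∀ (i : Fin 3) (f : Ω), r i f ≠ f
  comm02 : ∀ f : Ω, r 0 (r 2 f) = r 2 (r 0 f)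
  fpf02 : ∀ f : Ω, r 0 (r 2 f) ≠ f
  flag_transitive : ∀ f g : Ω,
    ∃ w ∈ Subgroup.closure ({r 0, r 1, r 2} : Set (Equiv.Perm Ω)), w f = g

/-- `a` is an `I`-coloring with respect to the connections `r`. -/
def IsColoringOn {Ω : Type} (r : Fin 3 → Ω → Ω) (I : Set (Fin 3)) (a : Ω → ZMod 2) : Prop :=
  ∀ (f : Ω) (j : Fin 3), (j ∈ I → a (r j f) = a f + 1) ∧ (j ∉ I → a (r j f) = a f)

/-- There exists an `I`-coloring with respect to the connections `r`. -/
def ColorableOn {Ω : Type} (r : Fin 3 → Ω → Ω) (I : Set (Fin 3)) : Prop :=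
  ∃ a : Ω → ZMod 2, IsColoringOn r I a

/-- `a` is an `I`-coloring of the map `M`. -/
def CMap.IsColoring {Ω : Type} (M : CMap Ω) (I : Set (Fin 3)) (a : Ω → ZMod 2) : Prop :=
  IsColoringOn (fun j f => M.r j f) I a

/-- The map `M` admits an `I`-coloring. -/
def CMap.Colorable {Ω : Type} (M : CMap Ω) (I : Set (Fin 3)) : Prop :=
  ∃ a : Ω → ZMod 2, M.IsColoring I a

/-- `T M` is the collection of subsets `I ⊆ {0,1,2}` for which `M` is `I`-colorable. -/
def CMap.T {Ω : Type} (M : CMap Ω) : Set (Set (Fin 3)) :=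
  {I | M.Colorable I}

/-- The connections of the medial map `Med(M)` on `Ω × ℤ/2ℤ`:
`(f,i)·s₀ = (f·r₁, i)`, `(f,0)·s₁ = (f·r₀, 0)`, `(f,1)·s₁ = (f·r₂, 1)`,
`(f,i)·s₂ = (f, 1-i)`. -/
def medialConn {Ω : Type} (M : CMap Ω) : Fin 3 → (Ω × ZMod 2) → (Ω × ZMod 2) :=
  ![fun x => (M.r 1 x.1, x.2),
    fun x => (if x.2 = 0 then M.r 0 x.1 else M.r 2 x.1, x.2),
    fun x => (x.1, 1 - x.2)]

/-!
Since `s₂` exchanges the two copies of `Ω` in `Med(M)`, a `J`-coloring of it is determined by its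
restriction to one copy: on the other copy it is the same function, shifted by `1` exactly when
`2 ∈ J`. Up to this shift, both copies therefore carry one function on `Ω`, on which `s₀` acts
through `r₁` and `s₁` acts through both `r₀` and `r₂`.
-/

/-- Each connection `r j` of `M` is realized on one of the two copies of `Ω` in `Med(M)` by
`s (medialIndex j)`, so that a `J`-coloring of `Med(M)` prescribes a `medialIndex ⁻¹' J`-coloring
of `M`. -/
def medialIndex : Fin 3 → Fin 3 := ![1, 0, 1]

section Coloring

variable {Ω : Type}

theorem isColoringOn_iff_indicator {r : Fin 3 → Ω → Ω} {I : Set (Fin 3)} {a : Ω → ZMod 2} :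
    IsColoringOn r I a ↔ ∀ f j, a (r j f) = a f + I.indicator 1 j := by
  refine forall₂_congr fun f j ↦ ?_
  by_cases hj : j ∈ I <;> simp [hj]

theorem exists_medialConn_medialIndex_eq (M : CMap Ω) (j : Fin 3) :
    ∃ i : ZMod 2, ∀ f, medialConn M (medialIndex j) (f, i) = (M.r j f, i) := by
  fin_cases j
  · exact ⟨0, fun _ ↦ rfl⟩
  · exact ⟨0, fun _ ↦ rfl⟩
  · exact ⟨1, fun _ ↦ rfl⟩

variable {M : CMap Ω} {J : Set (Fin 3)}

theorem IsColoringOn.medialConn_apply_mk {b : Ω × ZMod 2 → ZMod 2}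
    (hb : IsColoringOn (medialConn M) J b) (f : Ω) (i : ZMod 2) :
    b (f, i) = b (f, 0) + i * J.indicator 1 2 := by
  obtain rfl | rfl : i = 0 ∨ i = 1 := by decide +revert
  · simp
  · simpa [medialConn] using isColoringOn_iff_indicator.mp hb (f, 0) 2

theorem IsColoringOn.restrict_medialConn {b : Ω × ZMod 2 → ZMod 2}
    (hb : IsColoringOn (medialConn M) J b) :
    M.IsColoring (medialIndex ⁻¹' J) fun f ↦ b (f, 0) := by
  refine isColoringOn_iff_indicator.mpr fun f j ↦ ?_
  obtain ⟨i, hi⟩ := exists_medialConn_medialIndex_eq M j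
  have color_conn : b (M.r j f, i) = b (f, i) + J.indicator 1 (medialIndex j) :=
    hi f ▸ isColoringOn_iff_indicator.mp hb (f, i) (medialIndex j)
  rw [hb.medialConn_apply_mk, hb.medialConn_apply_mk f, add_right_comm] at color_conn
  exact add_right_cancel color_conn

theorem CMap.IsColoring.lift_medialConn {a : Ω → ZMod 2}
    (ha : M.IsColoring (medialIndex ⁻¹' J) a) :
    IsColoringOn (medialConn M) J fun x ↦ a x.1 + x.2 * J.indicator 1 2 := by
  have color_conn (j : Fin 3) (f : Ω) : a (M.r j f) = a f + J.indicator 1 (medialIndex j) :=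
    isColoringOn_iff_indicator.mp ha f j
  refine isColoringOn_iff_indicator.mpr fun ⟨f, i⟩ j ↦ ?_
  match j with
  | 0 =>
    change a (M.r 1 f) + i * J.indicator 1 2 = a f + i * J.indicator 1 2 + J.indicator 1 0
    rw [color_conn 1 f, add_right_comm]
    rfl
  | 1 =>
    have color_copy : a (if i = 0 then M.r 0 f else M.r 2 f) = a f + J.indicator 1 1 := by
      split_ifs
      exacts [color_conn 0 f, color_conn 2 f]
    change a (if i = 0 then M.r 0 f else M.r 2 f) + i * J.indicator 1 2 =
      a f + i * J.indicator 1 2 + J.indicator 1 1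
    rw [color_copy, add_right_comm]
  | 2 =>
    change a f + (1 - i) * J.indicator 1 2 = a f + i * J.indicator 1 2 + J.indicator 1 2
    rw [CharTwo.sub_eq_add]
    ring

theorem colorableOn_medialConn_iff (M : CMap Ω) (J : Set (Fin 3)) :
    ColorableOn (medialConn M) J ↔ M.Colorable (medialIndex ⁻¹' J) :=
  ⟨fun ⟨_, hb⟩ ↦ ⟨_, hb.restrict_medialConn⟩, fun ⟨_, ha⟩ ↦ ⟨_, ha.lift_medialConn⟩⟩

end Coloring

/-- `M` admits a `{1}`-coloring iff `Med(M)` admits a `{0}`-coloring. -/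
theorem colorable_one_iff_medial_colorable_zero {Ω : Type} (M : CMap Ω) :
    M.Colorable {1} ↔ ColorableOn (medialConn M) {0} := by
  have preimage_zero : medialIndex ⁻¹' {0} = {1} := by
    ext j
    fin_cases j <;> simp [medialIndex]
  rw [colorableOn_medialConn_iff, preimage_zero]
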